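/- arXiv:2402.13626 — 3 statements merged into one kernel-verified Lean document; each statement's English description precedes it below -/
import Mathlib

section
/- Let k ≥ 1 be an integer and let W : ℝ → [0,∞) be continuous with W(-1) = W(1) = 0 and W(z) ≥ α_W · min{(z+1)², (z-1)², β_W} for some α_W, β_W > 0. Define m_k = inf { ∫_{-∞}^{+∞} ( W(u) + (u^{(k)})² ) dt : u ∈ H^k_loc(ℝ), lim_{t→-∞} u(t) = -1, lim_{t→+∞} u(t) = +1 }. Then m_k > 0. -/
/-!
Let `E` be the energy of an admissible `u`. By the intermediate value theorem `u t₀ = 1/2` for some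
`t₀`. Where `W (u t)` is small, `u t` is close to `-1` or to `1`, so by Markov's inequality a small
`E` forces `u` to be close to `±1` off a set of small measure. Hence some step `h ∈ (0, 1)` has all
of `u (t₀ + h), …, u (t₀ + k h)` close to `±1` (`exists_good_step`). The `k`-th forward difference
`∑ (-1)^(k-j) C(k,j) u (t₀ + j h)` is then close to an integer plus `±1/2`, so it is at least `1/4`
in absolute value (`quarter_le_abs_fwdDiff`). On the other hand, the `k`-th difference with step at
most `1` is bounded by oscillations of `u^{(k-1)}` over intervals of length at most `1`, and hence
by `2 E + 1/8` (`abs_fwdDiff_iter_le_energy`). The two bounds are incompatible when `E < 1/32`.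
-/

open MeasureTheory Filter Topology Set
open scoped ENNReal NNReal

/-- The optimal-profile energy `∫_ℝ (W(u) + (u^{(k)})²) dt`. -/
noncomputable def transitionEnergy (k : ℕ) (W : ℝ → ℝ) (u : ℝ → ℝ) : ℝ≥0∞ :=
  ∫⁻ t : ℝ, ENNReal.ofReal (W (u t) + (iteratedDeriv k u t) ^ 2)

/-- The optimal-profile constant
`m_k = inf {∫_ℝ (W(u) + (u^{(k)})²) dt : u ∈ H^k_loc(ℝ), u(±∞) = ±1}`. -/
noncomputable def mK (k : ℕ) (W : ℝ → ℝ) : ℝ≥0∞ :=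
  ⨅ u ∈ {u : ℝ → ℝ | ContDiff ℝ k u ∧ Tendsto u atBot (𝓝 (-1)) ∧ Tendsto u atTop (𝓝 1)},
    transitionEnergy k W u

/-- A `k`-th difference with step in `[0, 1]` is bounded by the supremum of the `k`-th
derivative. -/
lemma abs_fwdDiff_iter_le (k : ℕ) : ∀ (f : ℝ → ℝ) (h M : ℝ), ContDiff ℝ k f → 0 ≤ h → h ≤ 1 →
    (∀ x, |iteratedDeriv k f x| ≤ M) → ∀ t, |(fwdDiff h)^[k] f t| ≤ M := by
  induction k with
  | zero =>
    intro f h M _ _ _ hM t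
    simpa using hM t
  | succ k ih =>
    intro f h M hf h0 h1 hM t
    have hfk : ContDiff ℝ k f := hf.of_le (by exact_mod_cast Nat.le_succ k)
    have hs : ContDiff ℝ k (fun x => f (x + h)) := hfk.comp (contDiff_id.add contDiff_const)
    rw [Function.iterate_succ_apply]
    refine ih (fwdDiff h f) h M (hs.sub hfk) h0 h1 (fun x => ?_) t
    have e : iteratedDeriv k (fwdDiff h f) x
        = iteratedDeriv k f (x + h) - iteratedDeriv k f x := by
      have : fwdDiff h f = (fun x => f (x + h)) - f := rfl
      rw [this, iteratedDeriv_sub hs.contDiffAt hfk.contDiffAt, iteratedDeriv_comp_add_const]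
    have hd : Differentiable ℝ (iteratedDeriv k f) :=
      hf.differentiable_iteratedDeriv k (by exact_mod_cast Nat.lt_succ_self k)
    have hb := Convex.norm_image_sub_le_of_norm_deriv_le (f := iteratedDeriv k f) (C := M)
      (s := univ) (x := x) (y := x + h) (fun y _ => hd y)
      (fun y _ => by rw [← iteratedDeriv_succ]; exact hM y) convex_univ (mem_univ _) (mem_univ _)
    rw [e]
    have hM0 : 0 ≤ M := (abs_nonneg _).trans (hM 0)
    simp only [Real.norm_eq_abs, add_sub_cancel_left, abs_of_nonneg h0] at hb
    nlinarith

/-- The bound `|D| ≤ 2 D² + 1/8`, integrated over an interval of length at most `1`. -/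
lemma abs_sub_le_of_lintegral_sq {g : ℝ → ℝ} (hg : ContDiff ℝ 1 g) {h ε : ℝ} (h0 : 0 ≤ h)
    (h1 : h ≤ 1) (hε : 0 ≤ ε)
    (hE : ∫⁻ t, ENNReal.ofReal ((deriv g t) ^ 2) ≤ ENNReal.ofReal ε) (x : ℝ) :
    |g (x + h) - g x| ≤ 2 * ε + 1 / 8 := by
  have hc : Continuous (deriv g) := hg.continuous_deriv le_rfl
  have hxy : x ≤ x + h := by linarith
  have hFTC : ∫ t in x..x + h, deriv g t = g (x + h) - g x :=
    intervalIntegral.integral_deriv_eq_sub (fun t _ => (hg.differentiable one_ne_zero) t)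
      (hc.intervalIntegrable _ _)
  have hsq : ∫ t in x..x + h, (deriv g t) ^ 2 ≤ ε := by
    rw [intervalIntegral.integral_of_le hxy,
      integral_eq_lintegral_of_nonneg_ae (Eventually.of_forall fun t => sq_nonneg _)
        (hc.pow 2).aestronglyMeasurable]
    refine ENNReal.toReal_le_of_le_ofReal hε ((setLIntegral_le_lintegral _ _).trans hE)
  rw [← hFTC]
  calc |∫ t in x..x + h, deriv g t|
      ≤ ∫ t in x..x + h, |deriv g t| := intervalIntegral.abs_integral_le_integral_abs hxy
    _ ≤ ∫ t in x..x + h, (2 * (deriv g t) ^ 2 + 1 / 8) := by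
        refine intervalIntegral.integral_mono_on hxy (hc.abs.intervalIntegrable _ _)
          ((((hc.pow 2).const_mul 2).add continuous_const).intervalIntegrable _ _)
          (fun t _ => ?_)
        nlinarith [sq_abs (deriv g t), sq_nonneg (4 * |deriv g t| - 1)]
    _ = 2 * (∫ t in x..x + h, (deriv g t) ^ 2) + h * (1 / 8) := by
        have hc2 : Continuous fun t => 2 * (deriv g t) ^ 2 := (hc.pow 2).const_mul 2
        rw [intervalIntegral.integral_add (hc2.intervalIntegrable _ _)
          (continuous_const.intervalIntegrable _ _), intervalIntegral.integral_const_mul]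
        simp
    _ ≤ 2 * ε + 1 / 8 := by linarith

/-- The `(k+1)`-th difference is the `k`-th difference of `u(· + h) - u`, whose `k`-th derivative is
an increment of `u^{(k)}`. -/
lemma abs_fwdDiff_iter_le_energy (k : ℕ) {u : ℝ → ℝ} (hu : ContDiff ℝ (k + 1 : ℕ) u) {h ε : ℝ}
    (h0 : 0 ≤ h) (h1 : h ≤ 1) (hε : 0 ≤ ε)
    (hE : ∫⁻ t, ENNReal.ofReal ((iteratedDeriv (k + 1) u t) ^ 2) ≤ ENNReal.ofReal ε) (t : ℝ) :
    |(fwdDiff h)^[k + 1] u t| ≤ 2 * ε + 1 / 8 := by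
  have huk : ContDiff ℝ k u := hu.of_le (by exact_mod_cast Nat.le_succ k)
  have hs : ContDiff ℝ k (fun x => u (x + h)) := huk.comp (contDiff_id.add contDiff_const)
  rw [Function.iterate_succ_apply]
  refine abs_fwdDiff_iter_le k (fwdDiff h u) h _ (hs.sub huk) h0 h1 (fun x => ?_) t
  have e : iteratedDeriv k (fwdDiff h u) x
      = iteratedDeriv k u (x + h) - iteratedDeriv k u x := by
    have : fwdDiff h u = (fun x => u (x + h)) - u := rfl
    rw [this, iteratedDeriv_sub hs.contDiffAt huk.contDiffAt, iteratedDeriv_comp_add_const]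
  rw [e]
  have hg : ContDiff ℝ 1 (iteratedDeriv k u) := by
    rw [iteratedDeriv_eq_iterate]
    exact ContDiff.iterate_deriv' 1 k (by rw [add_comm]; exact_mod_cast hu)
  refine abs_sub_le_of_lintegral_sq hg h0 h1 hε ?_ x
  simpa only [iteratedDeriv_succ] using hE

/-- The `j`-th point `t + j h` lies in `B` only for `h` in a set of measure `|B| / j ≤ |B|`. So if
`B` has measure less than `1 / k`, some step `h ∈ (0, 1)` makes the points
`t + h, …, t + k h` avoid `B`. -/
lemma exists_good_step (k : ℕ) (B : Set ℝ) (t : ℝ) (hB : k * volume B < 1) :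
    ∃ h ∈ Ioo (0 : ℝ) 1, ∀ j ∈ Finset.range k, t + ((j + 1 : ℕ) : ℝ) * h ∉ B := by
  by_contra! hcon
  have hsub : Ioo (0 : ℝ) 1 ⊆
      ⋃ j ∈ Finset.range k, (fun h : ℝ => ((j + 1 : ℕ) : ℝ) * h) ⁻¹' ((fun x => t + x) ⁻¹' B) := by
    intro h hh
    obtain ⟨j, hj, hjB⟩ := hcon h hh
    simp only [mem_iUnion]
    exact ⟨j, hj, hjB⟩
  have hle : (1 : ℝ≥0∞) ≤ k * volume B := by
    calc (1 : ℝ≥0∞) = volume (Ioo (0 : ℝ) 1) := by simp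
      _ ≤ _ := measure_mono hsub
      _ ≤ _ := measure_biUnion_finset_le _ _
      _ ≤ ∑ _j ∈ Finset.range k, volume B := by
          refine Finset.sum_le_sum fun j _ => ?_
          have hj : (1 : ℝ) ≤ ((j + 1 : ℕ) : ℝ) := by exact_mod_cast Nat.succ_le_succ (Nat.zero_le j)
          rw [Real.volume_preimage_mul_left (by positivity), measure_preimage_add]
          refine mul_le_of_le_one_left (zero_le) ?_
          rw [ENNReal.ofReal_le_one, abs_of_pos (by positivity)]
          exact inv_le_one_of_one_le₀ hj
      _ = k * volume B := by simp
  exact absurd hB (not_lt.mpr hle)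

/-- The `k`-th difference has integer coefficients with absolute values summing to `2 ^ k`, and `u t`
enters with coefficient `±1`, so it lies within `1/4` of a half-integer. -/
lemma quarter_le_abs_fwdDiff (k : ℕ) (u : ℝ → ℝ) (t h : ℝ) (ht : u t = 1 / 2)
    (hgood : ∀ j ∈ Finset.range k, ∃ s : ℤ, |u (t + ((j + 1 : ℕ) : ℝ) * h) - s| ≤ 1 / (4 * 2 ^ k)) :
    1 / 4 ≤ |(fwdDiff h)^[k] u t| := by
  choose! s hs using hgood
  set c : ℕ → ℤ := fun j => (-1) ^ (k - j) * (k.choose j : ℤ) with hc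
  have hsum : (fwdDiff h)^[k] u t
      = (∑ j ∈ Finset.range k, (c (j + 1) : ℝ) * u (t + ((j + 1 : ℕ) : ℝ) * h))
        + (-1) ^ k * (1 / 2) := by
    rw [fwdDiff_iter_eq_sum_shift, Finset.sum_range_succ']
    simp [hc, ht]
  set N : ℤ := ∑ j ∈ Finset.range k, c (j + 1) * s j with hN
  have herr : |(∑ j ∈ Finset.range k, (c (j + 1) : ℝ) * u (t + ((j + 1 : ℕ) : ℝ) * h)) - N|
      ≤ 1 / 4 := by
    rw [hN]
    push_cast
    rw [← Finset.sum_sub_distrib]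
    calc _ ≤ ∑ j ∈ Finset.range k, ((k.choose (j + 1) : ℕ) : ℝ) * (1 / (4 * 2 ^ k)) := by
          refine (Finset.abs_sum_le_sum_abs _ _).trans (Finset.sum_le_sum fun j hj => ?_)
          rw [← mul_sub, abs_mul]
          have : |(c (j + 1) : ℝ)| = (k.choose (j + 1) : ℕ) := by
            simp [hc, abs_mul]
          rw [this]
          have := hs j hj
          push_cast at this
          gcongr
      _ ≤ (2 ^ k : ℝ) * (1 / (4 * 2 ^ k)) := by
          rw [← Finset.sum_mul]
          gcongr
          have h2 := Nat.sum_range_choose k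
          rw [Finset.sum_range_succ'] at h2
          have h3 : ∑ j ∈ Finset.range k, k.choose (j + 1) ≤ 2 ^ k := by omega
          exact_mod_cast h3
      _ = 1 / 4 := by field_simp
  rw [hsum]
  have hint : (N : ℝ) ≤ -1 ∨ (N : ℝ) = 0 ∨ 1 ≤ (N : ℝ) := by
    rcases lt_trichotomy N 0 with h | h | h
    · left; exact_mod_cast (by omega : N ≤ -1)
    · right; left; exact_mod_cast h
    · right; right; exact_mod_cast h
  obtain ⟨ha, hb⟩ := abs_le.mp herr
  rw [le_abs]
  rcases neg_one_pow_eq_or ℝ k with h | h <;> rw [h] <;> rcases hint with h' | h' | h'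
  · right; linarith
  · left; linarith
  · left; linarith
  · right; linarith
  · right; linarith
  · left; linarith

/-- Proposition 4.2: the optimal-profile constant `m_k` is strictly positive. -/
theorem statement8 (k : ℕ) (hk : 1 ≤ k) (W : ℝ → ℝ) (αW βW : ℝ)
    (hα : 0 < αW) (hβ : 0 < βW) (hWc : Continuous W) (hWnn : ∀ z, 0 ≤ W z)
    (hWm : W (-1) = 0) (hWp : W 1 = 0)
    (hWlb : ∀ z, αW * min (min ((z + 1) ^ 2) ((z - 1) ^ 2)) βW ≤ W z) :
    0 < mK k W := by
  obtain ⟨n, rfl⟩ : ∃ n, k = n + 1 := ⟨k - 1, by omega⟩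
  set δ : ℝ := 1 / (4 * 2 ^ (n + 1)) with hδ
  have hδ0 : 0 < δ := by positivity
  -- `W z < η` forces `z` to be within `δ` of `-1` or `1`
  set η : ℝ := αW * min (δ ^ 2) βW with hη
  have hη0 : 0 < η := by positivity
  set ε : ℝ := min (η / (2 * (n + 1 : ℕ))) (1 / 33) with hεdef
  have hε0 : 0 < ε := by positivity
  refine lt_of_lt_of_le (ENNReal.ofReal_pos.mpr hε0) ?_
  refine le_iInf₂ fun u hu => ?_
  obtain ⟨huC, hbot, htop⟩ := hu
  by_contra! hlt
  unfold transitionEnergy at hlt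
  obtain ⟨t, ht⟩ : ∃ t, u t = 1 / 2 :=
    mem_range_of_exists_le_of_exists_ge huC.continuous
      ((hbot.eventually_lt_const (by norm_num : (-1 : ℝ) < 1 / 2)).exists.imp fun _ h => h.le)
      ((htop.eventually_const_lt (by norm_num : (1 / 2 : ℝ) < 1)).exists.imp fun _ h => h.le)
  set B : Set ℝ :=
    {t | ENNReal.ofReal η ≤ ENNReal.ofReal (W (u t) + (iteratedDeriv (n + 1) u t) ^ 2)} with hBdef
  have hcont : Continuous (fun t => W (u t) + (iteratedDeriv (n + 1) u t) ^ 2) :=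
    (hWc.comp huC.continuous).add ((huC.continuous_iteratedDeriv (n + 1) le_rfl).pow 2)
  have hmarkov := mul_meas_ge_le_lintegral (μ := volume) hcont.measurable.ennreal_ofReal
    (ENNReal.ofReal η)
  have hB : ((n + 1 : ℕ) : ℝ≥0∞) * volume B < 1 := by
    have h1 : volume B ≤ ENNReal.ofReal (ε / η) := by
      rw [ENNReal.ofReal_div_of_pos hη0, ENNReal.le_div_iff_mul_le (by simp [hη0]) (by simp),
        mul_comm]
      exact hmarkov.trans hlt.le
    have h2 : ((n + 1 : ℕ) : ℝ) * (ε / η) < 1 := by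
      have h3 : ε ≤ η / (2 * (n + 1 : ℕ)) := min_le_left _ _
      have h4 : (0 : ℝ) < (n + 1 : ℕ) := by positivity
      rw [le_div_iff₀ (by positivity)] at h3
      rw [← mul_div_assoc, div_lt_one hη0]
      nlinarith
    calc ((n + 1 : ℕ) : ℝ≥0∞) * volume B
        ≤ ((n + 1 : ℕ) : ℝ≥0∞) * ENNReal.ofReal (ε / η) := by gcongr
      _ = ENNReal.ofReal (((n + 1 : ℕ) : ℝ) * (ε / η)) := by
          rw [ENNReal.ofReal_mul (by positivity), ENNReal.ofReal_natCast]
      _ < 1 := by rwa [ENNReal.ofReal_lt_one]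
  obtain ⟨h, ⟨h0, h1⟩, hh⟩ := exists_good_step (n + 1) B t hB
  have hlow := quarter_le_abs_fwdDiff (n + 1) u t h ht (fun j hj => by
    have hj' := hh j hj
    generalize t + ((j + 1 : ℕ) : ℝ) * h = y at hj'
    simp only [hBdef, mem_ofPred_eq, not_le] at hj'
    have hy : W (u y) < η := by
      have := (ENNReal.ofReal_lt_ofReal_iff hη0).mp hj'
      nlinarith [sq_nonneg (iteratedDeriv (n + 1) u y)]
    have hm : min (min ((u y + 1) ^ 2) ((u y - 1) ^ 2)) βW < min (δ ^ 2) βW :=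
      lt_of_mul_lt_mul_left ((hWlb (u y)).trans_lt hy) hα.le
    have hm' : min ((u y + 1) ^ 2) ((u y - 1) ^ 2) < δ ^ 2 := by
      by_contra! hc
      exact absurd hm (not_lt.mpr (min_le_min_right _ hc))
    rcases min_lt_iff.mp hm' with h | h
    · exact ⟨-1, by rw [← hδ]; simpa using (abs_lt_of_sq_lt_sq h hδ0.le).le⟩
    · exact ⟨1, by rw [← hδ]; simpa using (abs_lt_of_sq_lt_sq h hδ0.le).le⟩)
  have hup := abs_fwdDiff_iter_le_energy n huC h0.le h1.le hε0.le
    ((lintegral_mono fun s => ENNReal.ofReal_le_ofReal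
      (le_add_of_nonneg_left (hWnn (u s)))).trans hlt.le) t
  have : ε ≤ 1 / 33 := min_le_right _ _
  linarith
end

section
/- Let k ≥ 1 be an integer and let W : ℝ → [0,∞) be continuous with W(-1) = W(1) = 0 and W(z) ≥ α_W · min{(z+1)², (z-1)², β_W} for some α_W, β_W > 0. For η ∈ (0, √β_W), integer N ≥ 1 and T > 0, let m_k(η, N, T) = inf { ∫_{-T}^{T} ( W(u) + (u^{(k)})² ) dt : u ∈ H^k(-T,T), |u(-T)+1| ≤ η, |u(T)-1| ≤ η, |u^{(ℓ)}(±T)| ≤ 1/N for all ℓ ∈ {1,…,k-1} }, and set m_k(η, N) = inf_{T>0} m_k(η, N, T). Let m̃_k = inf over T > 0 of inf { ∫_{-∞}^{+∞} ( W(u) + (u^{(k)})² ) dt : u ∈ H^k_loc(ℝ), u(t) = -1 for t ≤ -T, u(t) = 1 for t ≥ T }. Then lim_{η→0} lim_{N→+∞} m_k(η, N) = m̃_k. -/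
/-!
Every competitor for `mKtilde` is, on a slightly larger interval, a competitor for `mkEtaNT` with
all boundary conditions satisfied exactly, so `mkEtaN k W η N ≤ mKtilde k W`
(`mkEtaN_le_mKtilde`).

Conversely, a competitor `u` for `mkEtaNT` with small `η` and `1 / N` has at `±T` a `(k-1)`-jet
close to that of the constant `±1`, and can be continued to the well outside `(-T, T)` at small
cost (`mKtilde_le_mkEtaN_add`). The continuation replaces each monomial of the Taylor polynomial
of `u ∓ 1` of order below `k` by its cut-off at unit scale; these terms are small together with
their `k`-th derivatives, and `W` is small near its zeros. Since the competitors here are `C^k`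
functions rather than `H^k` functions, `u^{(k)}(±T)` must be matched too, and it is not controlled.
The corresponding term `u^{(k)}(T) s^k / k!` is therefore cut off at a scale `δ` depending on `u`:
by scaling its `k`-th derivative is bounded by a multiple of `|u^{(k)}(T)|` and supported in
`[0, δ]`, hence contributes `O(δ |u^{(k)}(T)|²)` to the energy (`exists_extension`). Gluing is done
by adding to the continuation `q` the truncation of `u - q` to one side of the endpoint, which is
`C^k` because the full `k`-jet of `u - q` vanishes there (`contDiff_truncate`).

The limit in `N` exists by monotonicity, and the two inequalities squeeze it onto `mKtilde k W`.
-/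

open MeasureTheory Filter Topology Set
open scoped ENNReal NNReal

/-- The constant `m̃_k`: the infimum over `T > 0` and profiles identically `-1` on
`(-∞, -T]` and `1` on `[T, +∞)` of the optimal-profile energy. -/
noncomputable def mKtilde (k : ℕ) (W : ℝ → ℝ) : ℝ≥0∞ :=
  ⨅ u ∈ {u : ℝ → ℝ | ContDiff ℝ k u ∧
      ∃ T > (0:ℝ), (∀ t ≤ -T, u t = -1) ∧ (∀ t, T ≤ t → u t = 1)},
    transitionEnergy k W u

/-- The approximate optimal-profile value `m_k(η, N, T)` on the interval `(-T,T)`,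
with boundary values `η`-close to `∓1` and derivatives up to order `k-1` bounded by
`1/N` at the endpoints `±T`. -/
noncomputable def mkEtaNT (k : ℕ) (W : ℝ → ℝ) (η : ℝ) (N : ℕ) (T : ℝ) : ℝ≥0∞ :=
  ⨅ u ∈ {u : ℝ → ℝ | ContDiff ℝ k u ∧ |u (-T) + 1| ≤ η ∧ |u T - 1| ≤ η ∧
      ∀ ℓ : ℕ, 1 ≤ ℓ → ℓ ≤ k - 1 →
        |iteratedDeriv ℓ u (-T)| ≤ 1 / (N : ℝ) ∧ |iteratedDeriv ℓ u T| ≤ 1 / (N : ℝ)},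
    ∫⁻ t in Set.Ioo (-T) T, ENNReal.ofReal (W (u t) + (iteratedDeriv k u t) ^ 2)

/-- `m_k(η, N) = inf_{T > 0} m_k(η, N, T)`. -/
noncomputable def mkEtaN (k : ℕ) (W : ℝ → ℝ) (η : ℝ) (N : ℕ) : ℝ≥0∞ :=
  ⨅ T ∈ Set.Ioi (0:ℝ), mkEtaNT k W η N T

/-! ### Cut-off jets and gluing -/

/-- A smooth function supported near `0` whose jet at `0` is the `ℓ`-th unit jet: a cut-off of
the monomial `s ^ ℓ / ℓ!`. -/
lemma exists_jet_bump (ℓ : ℕ) : ∃ φ : ℝ → ℝ, (∀ n : ℕ, ContDiff ℝ n φ) ∧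
    (∀ j : ℕ, iteratedDeriv j φ 0 = if j = ℓ then 1 else 0) ∧
    (∀ j : ℕ, ∀ s : ℝ, 1 ≤ s → iteratedDeriv j φ s = 0) ∧
    (∀ j : ℕ, ∃ M : ℝ, ∀ s, |iteratedDeriv j φ s| ≤ M) := by
  let χ : ContDiffBump (0 : ℝ) := ⟨1 / 4, 1 / 2, by norm_num, by norm_num⟩
  have hsm : ∀ n : ℕ, ContDiff ℝ n (fun s : ℝ => (ℓ.factorial : ℝ)⁻¹ * s ^ ℓ * χ s) := fun n =>
    (contDiff_const.mul (contDiff_id.pow ℓ)).mul χ.contDiff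
  have hcs : HasCompactSupport (fun s : ℝ => (ℓ.factorial : ℝ)⁻¹ * s ^ ℓ * χ s) :=
    χ.hasCompactSupport.mul_left
  refine ⟨fun s => (ℓ.factorial : ℝ)⁻¹ * s ^ ℓ * χ s, hsm, ?_, ?_, ?_⟩
  · intro j
    have h : (fun s : ℝ => (ℓ.factorial : ℝ)⁻¹ * s ^ ℓ * χ s)
        =ᶠ[𝓝 0] fun s => (ℓ.factorial : ℝ)⁻¹ * s ^ ℓ := by
      filter_upwards [χ.eventuallyEq_one] with s hs
      simp [hs]
    rw [h.iteratedDeriv_eq, iteratedDeriv_const_mul_field, iteratedDeriv_fun_pow_zero]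
    have : (ℓ.factorial : ℝ) ≠ 0 := by positivity
    split_ifs <;> simp [this]
  · intro j s hs
    have h : (fun s : ℝ => (ℓ.factorial : ℝ)⁻¹ * s ^ ℓ * χ s) =ᶠ[𝓝 s] fun _ => 0 := by
      filter_upwards [lt_mem_nhds (show (1 / 2 : ℝ) < s by linarith)] with r hr
      rw [χ.zero_of_le_dist, mul_zero]
      rw [Real.dist_eq, sub_zero]
      exact hr.le.trans (le_abs_self r)
    rw [h.iteratedDeriv_eq, iteratedDeriv_fun_const_zero]
  · intro j
    have hc : HasCompactSupport
        (iteratedDeriv j (fun s : ℝ => (ℓ.factorial : ℝ)⁻¹ * s ^ ℓ * χ s)) := by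
      rw [iteratedDeriv_eq_iterate]
      induction j with
      | zero => exact hcs
      | succ n ih =>
        rw [Function.iterate_succ_apply']
        exact ih.deriv
    obtain ⟨M, hM⟩ := hc.exists_bound_of_continuous ((hsm j).continuous_iteratedDeriv' j)
    exact ⟨M, fun s => by simpa using hM s⟩

/-- Truncating a `C^n` function at a point where its whole `n`-jet vanishes keeps it `C^n`. -/
lemma contDiff_truncate (n : ℕ) : ∀ w : ℝ → ℝ, ContDiff ℝ n w →
    (∀ j ≤ n, iteratedDeriv j w 0 = 0) → ContDiff ℝ n ((Iic (0 : ℝ)).indicator w) := by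
  -- a function vanishing at `0` can be truncated continuously
  have hcont : ∀ w : ℝ → ℝ, Continuous w → w 0 = 0 → Continuous ((Iic (0 : ℝ)).indicator w) := by
    intro w hw h0
    refine hw.indicator ?_
    intro a ha
    rw [frontier_Iic, mem_singleton_iff] at ha
    rw [ha, h0]
  induction n with
  | zero =>
    intro w hw h
    rw [Nat.cast_zero, contDiff_zero] at hw ⊢
    exact hcont w hw (by simpa using h 0 le_rfl)
  | succ n ih =>
    intro w hw h
    have hw' := hw
    rw [Nat.cast_succ, contDiff_succ_iff_deriv] at hw ⊢
    obtain ⟨hd, -, hdc⟩ := hw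
    have h0 : w 0 = 0 := by simpa using h 0 (Nat.zero_le _)
    have h1 : deriv w 0 = 0 := by simpa [iteratedDeriv_one] using h 1 (by omega)
    have hder : ∀ x, HasDerivAt ((Iic (0 : ℝ)).indicator w)
        ((Iic (0 : ℝ)).indicator (deriv w) x) x := by
      intro x
      rcases lt_trichotomy x 0 with hx | hx | hx
      · rw [indicator_of_mem (show x ∈ Iic (0 : ℝ) from hx.le)]
        refine (hd x).hasDerivAt.congr_of_eventuallyEq ?_
        filter_upwards [gt_mem_nhds hx] with y hy
        exact indicator_of_mem (show y ∈ Iic (0 : ℝ) from hy.le) _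
      · subst hx
        rw [indicator_of_mem (show (0 : ℝ) ∈ Iic (0 : ℝ) from self_mem_Iic), h1]
        have := (hd 0).hasDerivAt
        rw [h1, hasDerivAt_iff_isLittleO] at this
        rw [hasDerivAt_iff_isLittleO]
        refine Asymptotics.IsBigO.trans_isLittleO (Asymptotics.IsBigO.of_bound 1 ?_) this
        refine Eventually.of_forall fun y => ?_
        by_cases hy : y ∈ Iic (0 : ℝ)
        · simp [indicator_of_mem hy, h0]
        · simp [indicator_of_notMem hy, h0]
      · rw [indicator_of_notMem (show x ∉ Iic (0 : ℝ) from not_le.2 hx)]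
        refine (hasDerivAt_const x (0 : ℝ)).congr_of_eventuallyEq ?_
        filter_upwards [lt_mem_nhds hx] with y hy
        exact indicator_of_notMem (show y ∉ Iic (0 : ℝ) from not_le.2 hy) _
    refine ⟨fun x => (hder x).differentiableAt, by simp, ?_⟩
    rw [funext fun x => (hder x).deriv]
    refine ih _ hdc fun j hj => ?_
    rw [← iteratedDeriv_succ']
    exact h (j + 1) (by omega)

/-- A `C^k` function with small `(k-1)`-jet at `0` can be steered to `0` within unit time, staying
small, and with small `k`-th derivative except on a window `(0, δ]` of negligible energy `B δ`.
The window is needed because `w^{(k)}(0)` has to be matched but is not controlled: the term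
`w^{(k)}(0) s^k / k!` is cut off at scale `δ`, which keeps its `k`-th derivative bounded
independently of `δ`. -/
lemma exists_extension (k : ℕ) (hk : 1 ≤ k) (ε : ℝ) (hε : 0 < ε) : ∃ ρ > (0 : ℝ),
    ∀ w : ℝ → ℝ, ContDiff ℝ k w → (∀ ℓ < k, |iteratedDeriv ℓ w 0| ≤ ρ) →
    ∃ v : ℝ → ℝ, ∃ δ B : ℝ, ContDiff ℝ k v ∧ (∀ t ≤ 0, v t = w t) ∧ (∀ t, 1 ≤ t → v t = 0) ∧
      (∀ t > 0, |v t| ≤ ε) ∧ 0 < δ ∧ δ ≤ 1 ∧ 0 ≤ B ∧ B * δ ≤ ε ∧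
      (∀ t > 0, iteratedDeriv k v t ^ 2 ≤ ε + if t ≤ δ then B else 0) := by
  choose φ hφ hφ0 hφ1 hφb using exists_jet_bump
  choose M' hM' using hφb
  obtain ⟨M, hM1, hM⟩ : ∃ M : ℝ, 1 ≤ M ∧ ∀ ℓ ≤ k, ∀ s,
      |φ ℓ s| ≤ M ∧ |iteratedDeriv k (φ ℓ) s| ≤ M := by
    have hnn : ∀ ℓ j, 0 ≤ M' ℓ j := fun ℓ j => (abs_nonneg _).trans (hM' ℓ j 0)
    refine ⟨1 + ∑ ℓ ∈ Finset.range (k + 1), (M' ℓ 0 + M' ℓ k), ?_, fun ℓ hℓ s => ?_⟩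
    · have := Finset.sum_nonneg (s := Finset.range (k + 1))
        (fun ℓ _ => add_nonneg (hnn ℓ 0) (hnn ℓ k))
      linarith
    · have := Finset.single_le_sum (s := Finset.range (k + 1)) (f := fun ℓ => M' ℓ 0 + M' ℓ k)
        (fun ℓ _ => add_nonneg (hnn ℓ 0) (hnn ℓ k)) (Finset.mem_range.2 (Nat.lt_succ_of_le hℓ))
      have h0 := hM' ℓ 0 s
      have h1 := hM' ℓ k s
      have h2 := hnn ℓ 0
      have h3 := hnn ℓ k
      rw [iteratedDeriv_zero] at h0
      constructor <;> linarith
  obtain ⟨τ, hτ0, hτ1, hτε, hτ2⟩ : ∃ τ : ℝ, 0 < τ ∧ τ ≤ 1 ∧ τ ≤ ε ∧ 2 * τ ^ 2 ≤ ε := by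
    have h1 : min 1 ε ≤ 1 := min_le_left _ _
    have h2 : min 1 ε ≤ ε := min_le_right _ _
    have h3 : 0 < min 1 ε := lt_min one_pos hε
    exact ⟨min 1 ε / 2, by positivity, by linarith, by linarith, by nlinarith⟩
  have hM0 : 0 < M := by linarith
  have hK : 0 < (k + 1) * M := by positivity
  obtain ⟨ρ, hρ0, hρ⟩ : ∃ ρ : ℝ, 0 < ρ ∧ (k + 1) * M * ρ = τ :=
    ⟨τ / ((k + 1) * M), by positivity, by field_simp⟩
  have hkρ : 0 ≤ k * ρ * M := by positivity
  have hρM0 : 0 ≤ ρ * M := by positivity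
  have hρM : ρ * M ≤ τ := by linarith
  have hkρM : k * ρ * M ≤ τ := by linarith
  have hρ1 : ρ ≤ 1 := by nlinarith
  refine ⟨ρ, hρ0, fun w hw hj => ?_⟩
  obtain ⟨A, hA⟩ : ∃ A, A = iteratedDeriv k w 0 := ⟨_, rfl⟩
  -- the scale at which the `k`-th order term is cut off
  obtain ⟨δ, hδ0, hδ1, hAδ, hAδ2⟩ : ∃ δ : ℝ, 0 < δ ∧ δ ≤ 1 ∧ |A| * δ ≤ ρ ∧
      A ^ 2 * δ ≤ ρ ^ 2 := by
    have hA0 := abs_nonneg A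
    have hr0 : 0 < ρ / (1 + |A|) := by positivity
    have hr1 : ρ / (1 + |A|) ≤ ρ := div_le_self hρ0.le (by linarith)
    have hr2 : |A| * (ρ / (1 + |A|)) ≤ ρ := by
      rw [mul_div_assoc', div_le_iff₀ (by positivity)]
      nlinarith
    have hr3 : 0 ≤ |A| * (ρ / (1 + |A|)) := by positivity
    refine ⟨(ρ / (1 + |A|)) ^ 2, by positivity, by nlinarith, by nlinarith, ?_⟩
    rw [← sq_abs, ← mul_pow]
    exact pow_le_pow_left₀ hr3 hr2 2
  let q : ℝ → ℝ := fun t => ∑ ℓ ∈ Finset.range k, iteratedDeriv ℓ w 0 * φ ℓ t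
    + A * δ ^ k * φ k (δ⁻¹ * t)
  have hqs1 : ∀ n : ℕ, ContDiff ℝ n
      (fun t => ∑ ℓ ∈ Finset.range k, iteratedDeriv ℓ w 0 * φ ℓ t) := fun n =>
    ContDiff.sum fun ℓ _ => contDiff_const.mul (hφ ℓ n)
  have hqs2 : ∀ n : ℕ, ContDiff ℝ n (fun t => A * δ ^ k * φ k (δ⁻¹ * t)) := fun n =>
    contDiff_const.mul ((hφ k n).comp (contDiff_const.mul contDiff_id))
  have hqs : ∀ n : ℕ, ContDiff ℝ n q := fun n => (hqs1 n).add (hqs2 n)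
  have hqd : ∀ (j : ℕ) (t : ℝ), iteratedDeriv j q t =
      ∑ ℓ ∈ Finset.range k, iteratedDeriv ℓ w 0 * iteratedDeriv j (φ ℓ) t
      + A * δ ^ k * (δ⁻¹ ^ j * iteratedDeriv j (φ k) (δ⁻¹ * t)) := by
    intro j t
    rw [iteratedDeriv_fun_add (hqs1 j).contDiffAt (hqs2 j).contDiffAt,
      iteratedDeriv_fun_sum fun ℓ _ => (contDiff_const.mul (hφ ℓ j)).contDiffAt,
      iteratedDeriv_const_mul_field, iteratedDeriv_comp_const_mul (hφ k j)]
    simp only [iteratedDeriv_const_mul_field]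
  have hjet : ∀ j ≤ k, iteratedDeriv j q 0 = iteratedDeriv j w 0 := by
    intro j hjk
    rw [hqd]
    simp only [mul_zero, hφ0, mul_ite, mul_one, Finset.sum_ite_eq, Finset.mem_range]
    rcases hjk.lt_or_eq with h | h
    · rw [if_pos h, if_neg h.ne, add_zero]
    · subst h
      rw [if_neg (lt_irrefl _), if_pos rfl, zero_add, inv_pow, mul_assoc,
        mul_inv_cancel₀ (by positivity), mul_one, hA]
  have hsum : ∀ f : ℕ → ℝ, (∀ ℓ < k, |f ℓ| ≤ M) →
      |∑ ℓ ∈ Finset.range k, iteratedDeriv ℓ w 0 * f ℓ| ≤ k * ρ * M := by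
    intro f hf
    refine (Finset.abs_sum_le_sum_abs _ _).trans ?_
    refine (Finset.sum_le_card_nsmul _ _ (ρ * M) fun ℓ hℓ => ?_).trans ?_
    · rw [Finset.mem_range] at hℓ
      rw [abs_mul]
      exact mul_le_mul (hj ℓ hℓ) (hf ℓ hℓ) (abs_nonneg _) hρ0.le
    · rw [Finset.card_range, nsmul_eq_mul, mul_assoc]
  have hvq : ∀ t > 0, (q + (Iic (0 : ℝ)).indicator (w - q)) t = q t := by
    intro t ht
    rw [Pi.add_apply, indicator_of_notMem (show t ∉ Iic (0 : ℝ) from not_le.2 ht), add_zero]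
  refine ⟨q + (Iic (0 : ℝ)).indicator (w - q), δ, 2 * A ^ 2 * M ^ 2, ?_, ?_, ?_, ?_, hδ0, hδ1,
    by positivity, ?_, ?_⟩
  · refine (hqs k).add (contDiff_truncate k _ (hw.sub (hqs k)) fun j hjk => ?_)
    rw [iteratedDeriv_sub (hw.of_le (by exact_mod_cast hjk)).contDiffAt (hqs j).contDiffAt,
      hjet j hjk, sub_self]
  · intro t ht
    rw [Pi.add_apply, indicator_of_mem (show t ∈ Iic (0 : ℝ) from ht), Pi.sub_apply]
    ring
  · intro t ht
    have h1 : 1 ≤ δ⁻¹ * t := by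
      rw [← div_eq_inv_mul, one_le_div hδ0]
      linarith
    have h := fun ℓ s hs => hφ1 ℓ 0 s hs
    simp only [iteratedDeriv_zero] at h
    rw [hvq t (by linarith)]
    simp only [q]
    rw [h k _ h1, mul_zero, add_zero]
    exact Finset.sum_eq_zero fun ℓ _ => by rw [h ℓ t ht, mul_zero]
  · intro t ht
    rw [hvq t ht]
    have h1 := hsum (fun ℓ => φ ℓ t) fun ℓ hℓ => (hM ℓ hℓ.le t).1
    have h2 : |A * δ ^ k * φ k (δ⁻¹ * t)| ≤ ρ * M := by
      rw [abs_mul, abs_mul, abs_of_pos (pow_pos hδ0 k)]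
      refine mul_le_mul ?_ (hM k le_rfl _).1 (abs_nonneg _) hρ0.le
      refine le_trans ?_ hAδ
      gcongr
      exact pow_le_of_le_one hδ0.le hδ1 (by omega)
    exact (abs_add_le _ _).trans (by linarith)
  · have : A ^ 2 * δ * M ^ 2 ≤ ρ ^ 2 * M ^ 2 := by gcongr
    have : (ρ * M) ^ 2 ≤ τ ^ 2 := by gcongr
    nlinarith
  · intro t ht
    have hEq : iteratedDeriv k (q + (Iic (0 : ℝ)).indicator (w - q)) t = iteratedDeriv k q t :=
      (show EqOn _ q (Ioi 0) from hvq).iteratedDeriv_of_isOpen isOpen_Ioi k ht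
    rw [hEq, hqd]
    have h0 : A * δ ^ k * (δ⁻¹ ^ k * iteratedDeriv k (φ k) (δ⁻¹ * t))
        = A * iteratedDeriv k (φ k) (δ⁻¹ * t) := by
      rw [inv_pow]
      field_simp
    have h1 := hsum (fun ℓ => iteratedDeriv k (φ ℓ) t) fun ℓ hℓ => (hM ℓ hℓ.le t).2
    have h1' := sq_le_sq' (neg_le_of_abs_le h1) (le_of_abs_le h1)
    have h3 : (k * ρ * M) ^ 2 ≤ τ ^ 2 := by gcongr
    rw [h0]
    split_ifs with htδ
    · have h2 : (A * iteratedDeriv k (φ k) (δ⁻¹ * t)) ^ 2 ≤ A ^ 2 * M ^ 2 := by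
        rw [mul_pow, ← sq_abs (iteratedDeriv _ _ _)]
        have := (hM k le_rfl (δ⁻¹ * t)).2
        gcongr
      have h4 := add_sq_le (a := ∑ ℓ ∈ Finset.range k, iteratedDeriv ℓ w 0 *
        iteratedDeriv k (φ ℓ) t) (b := A * iteratedDeriv k (φ k) (δ⁻¹ * t))
      linarith
    · have h5 : 1 ≤ δ⁻¹ * t := by
        rw [← div_eq_inv_mul, one_le_div hδ0]
        linarith
      rw [hφ1 k k _ h5, mul_zero, add_zero, add_zero]
      linarith [sq_nonneg τ]

/-! ### Continuation to the wells and comparison of the energies -/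

/-- A `C^k` function whose `(k-1)`-jet at `T` is close to that of the constant well `c` can be
continued past `T` so as to equal `c` from `T + 1` on, at arbitrarily small energy cost. -/
lemma exists_extension_energy (k : ℕ) (hk : 1 ≤ k) (W : ℝ → ℝ) (hWc : Continuous W) (c : ℝ)
    (hc : W c = 0) (ε : ℝ) (hε : 0 < ε) : ∃ ρ > (0 : ℝ), ∀ (u : ℝ → ℝ) (T : ℝ),
    ContDiff ℝ k u → |u T - c| ≤ ρ → (∀ ℓ : ℕ, 1 ≤ ℓ → ℓ ≤ k - 1 → |iteratedDeriv ℓ u T| ≤ ρ) →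
    ∃ v : ℝ → ℝ, ContDiff ℝ k v ∧ (∀ t ≤ T, v t = u t) ∧ (∀ t, T + 1 ≤ t → v t = c) ∧
      ∫⁻ t in Ioi T, ENNReal.ofReal (W (v t) + iteratedDeriv k v t ^ 2)
        ≤ ENNReal.ofReal (3 * ε) := by
  obtain ⟨r, hr, hWr⟩ := Metric.continuousAt_iff.1 hWc.continuousAt ε hε
  have hm : 0 < min ε (r / 2) := lt_min hε (by positivity)
  obtain ⟨ρ, hρ, H⟩ := exists_extension k hk (min ε (r / 2)) hm
  refine ⟨ρ, hρ, fun u T hu h0 hj => ?_⟩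
  have hws : ContDiff ℝ k (fun t => -c + u (t + T)) :=
    contDiff_const.add (hu.comp (contDiff_id.add contDiff_const))
  obtain ⟨v, δ, B, hv, hvl, hvr, hvε, hδ0, hδ1, hB, hBδ, hder⟩ := H _ hws (by
    intro ℓ hℓ
    rcases Nat.eq_zero_or_pos ℓ with h | h
    · subst h
      rw [iteratedDeriv_zero, zero_add, neg_add_eq_sub]
      exact h0
    · rw [iteratedDeriv_const_add h, iteratedDeriv_comp_add_const]
      simp only [zero_add]
      exact hj ℓ h (by omega))
  have hVd : ∀ t, iteratedDeriv k (fun t => c + v (t - T)) t = iteratedDeriv k v (t - T) := by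
    intro t
    rw [iteratedDeriv_const_add (by omega), iteratedDeriv_comp_sub_const]
  refine ⟨fun t => c + v (t - T), contDiff_const.add (hv.comp (contDiff_id.sub contDiff_const)),
    ?_, ?_, ?_⟩
  · intro t ht
    simp only
    rw [hvl _ (by linarith), sub_add_cancel]
    ring
  · intro t ht
    simp only
    rw [hvr _ (by linarith), add_zero]
  have hpt : ∀ t ∈ Ioi T, ENNReal.ofReal (W (c + v (t - T)) +
      iteratedDeriv k (fun t => c + v (t - T)) t ^ 2) ≤
      (Ioc T (T + 1)).indicator (fun _ => ENNReal.ofReal (2 * ε)) t +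
      (Ioc T (T + δ)).indicator (fun _ => ENNReal.ofReal B) t := by
    intro t ht
    rw [mem_Ioi] at ht
    rw [hVd]
    by_cases ht1 : t ≤ T + 1
    · rw [indicator_of_mem (show t ∈ Ioc T (T + 1) from ⟨ht, ht1⟩)]
      have h1 : W (c + v (t - T)) ≤ ε := by
        have h2 := hvε (t - T) (by linarith)
        have h3 := hWr (x := c + v (t - T)) (by
          rw [Real.dist_eq, add_sub_cancel_left]
          linarith [min_le_right ε (r / 2)])
        rw [hc, Real.dist_eq, sub_zero] at h3
        exact (le_abs_self _).trans h3.le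
      have h2 := hder (t - T) (by linarith)
      have h3 := min_le_left ε (r / 2)
      by_cases htδ : t ≤ T + δ
      · rw [indicator_of_mem (show t ∈ Ioc T (T + δ) from ⟨ht, htδ⟩),
          ← ENNReal.ofReal_add (by positivity) hB]
        rw [if_pos (by linarith)] at h2
        exact ENNReal.ofReal_le_ofReal (by linarith)
      · rw [indicator_of_notMem (show t ∉ Ioc T (T + δ) from fun h => htδ h.2), add_zero]
        rw [if_neg (by intro; apply htδ; linarith)] at h2
        exact ENNReal.ofReal_le_ofReal (by linarith)
    · have h1 : 1 < t - T := by linarith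
      have h2 : v =ᶠ[𝓝 (t - T)] fun _ => 0 := by
        filter_upwards [lt_mem_nhds h1] with s hs using hvr s hs.le
      rw [h2.iteratedDeriv_eq, iteratedDeriv_fun_const_zero, hvr _ h1.le, add_zero, hc]
      simp
  refine (setLIntegral_mono' measurableSet_Ioi hpt).trans ?_
  refine (setLIntegral_le_lintegral _ _).trans ?_
  rw [lintegral_add_left (measurable_const.indicator measurableSet_Ioc),
    lintegral_indicator_const measurableSet_Ioc, lintegral_indicator_const measurableSet_Ioc,
    Real.volume_Ioc, Real.volume_Ioc, ← ENNReal.ofReal_mul (by positivity),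
    ← ENNReal.ofReal_mul hB, ← ENNReal.ofReal_add (mul_nonneg (by positivity) (by linarith))
      (mul_nonneg hB (by linarith))]
  apply ENNReal.ofReal_le_ofReal
  rw [add_sub_cancel_left, add_sub_cancel_left]
  linarith [min_le_left ε (r / 2)]

/-- The squared `k`-th derivative is invariant under reflection. -/
lemma iteratedDeriv_comp_neg_sq (k : ℕ) (f : ℝ → ℝ) (t : ℝ) :
    iteratedDeriv k (fun x => f (-x)) t ^ 2 = iteratedDeriv k f (-t) ^ 2 := by
  rw [iteratedDeriv_comp_neg, smul_eq_mul, mul_pow, ← pow_mul, mul_comm k 2, pow_mul]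
  simp

/-- Competitors for `mkEtaNT` with small boundary jets extend to competitors for `mKtilde`, by
continuing them to the wells on both sides. -/
lemma mKtilde_le_mkEtaN_add (k : ℕ) (hk : 1 ≤ k) (W : ℝ → ℝ) (hWc : Continuous W)
    (hWm : W (-1) = 0) (hWp : W 1 = 0) (ε : ℝ) (hε : 0 < ε) : ∃ ρ > (0 : ℝ), ∀ η ≤ ρ, ∀ N : ℕ,
    1 / (N : ℝ) ≤ ρ → mKtilde k W ≤ mkEtaN k W η N + ENNReal.ofReal ε := by
  obtain ⟨ρ₁, hρ₁, H₁⟩ := exists_extension_energy k hk W hWc 1 hWp (ε / 6) (by positivity)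
  obtain ⟨ρ₂, hρ₂, H₂⟩ := exists_extension_energy k hk W hWc (-1) hWm (ε / 6) (by positivity)
  refine ⟨min ρ₁ ρ₂, lt_min hρ₁ hρ₂, fun η hη N hN => ?_⟩
  have hη₁ := hη.trans (min_le_left _ _)
  have hη₂ := hη.trans (min_le_right _ _)
  have hN₁ := hN.trans (min_le_left _ _)
  have hN₂ := hN.trans (min_le_right _ _)
  simp only [mkEtaN, mkEtaNT, ENNReal.iInf_add]
  refine le_iInf₂ fun T hT => le_iInf₂ fun u hu => ?_
  obtain ⟨hus, hum, hup, huj⟩ := hu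
  rw [mem_Ioi] at hT
  obtain ⟨v, hvs, hvl, hvr, hvE⟩ := H₁ u T hus (hup.trans hη₁)
    fun ℓ h1 h2 => (huj ℓ h1 h2).2.trans hN₁
  have hvj : ∀ ℓ, iteratedDeriv ℓ v (-T) = iteratedDeriv ℓ u (-T) := by
    intro ℓ
    refine Filter.EventuallyEq.iteratedDeriv_eq ℓ ?_
    filter_upwards [gt_mem_nhds (show -T < T by linarith)] with s hs using hvl s hs.le
  -- the left end is treated as the right end of the reflected function
  obtain ⟨z, hzs, hzl, hzr, hzE⟩ := H₂ (fun t => v (-t)) T (hvs.comp contDiff_neg)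
    (by
      rw [hvl _ (by linarith), sub_neg_eq_add]
      exact hum.trans hη₂)
    fun ℓ h1 h2 => by
      rw [iteratedDeriv_comp_neg, smul_eq_mul, abs_mul, abs_neg_one_pow, one_mul, hvj]
      exact (huj ℓ h1 h2).1.trans hN₂
  have hfv : ∀ t, -T ≤ t → z (-t) = v t := fun t ht => by
    rw [hzl _ (by linarith), neg_neg]
  have hadm : (∀ t ≤ -(T + 1), z (-t) = -1) ∧ ∀ t, T + 1 ≤ t → z (-t) = 1 :=
    ⟨fun t ht => hzr _ (by linarith), fun t ht => by rw [hfv _ (by linarith), hvr _ ht]⟩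
  refine (iInf₂_le (fun t => z (-t)) ⟨hzs.comp contDiff_neg, T + 1, by linarith, hadm⟩).trans ?_
  have hmid : ∫⁻ t in Icc (-T) T, ENNReal.ofReal (W (z (-t)) +
      iteratedDeriv k (fun t => z (-t)) t ^ 2) =
      ∫⁻ t in Ioo (-T) T, ENNReal.ofReal (W (u t) + iteratedDeriv k u t ^ 2) := by
    rw [← setLIntegral_congr Ioo_ae_eq_Icc]
    refine setLIntegral_congr_fun measurableSet_Ioo ?_
    have hE : EqOn (fun t => z (-t)) u (Ioo (-T) T) := fun t ht =>
      (hfv t ht.1.le).trans (hvl t ht.2.le)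
    intro t ht
    have h1 := hE ht
    simp only at h1 ⊢
    rw [h1, hE.iteratedDeriv_of_isOpen isOpen_Ioo k ht]
  have hright : ∫⁻ t in Ioi T, ENNReal.ofReal (W (z (-t)) +
      iteratedDeriv k (fun t => z (-t)) t ^ 2) ≤ ENNReal.ofReal (3 * (ε / 6)) := by
    refine le_of_eq_of_le (setLIntegral_congr_fun measurableSet_Ioi ?_) hvE
    have hE : EqOn (fun t => z (-t)) v (Ioi T) := fun t ht =>
      hfv t (by have := mem_Ioi.1 ht; linarith)
    intro t ht
    have h1 := hE ht
    simp only at h1 ⊢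
    rw [h1, hE.iteratedDeriv_of_isOpen isOpen_Ioi k ht]
  have hleft : ∫⁻ t in Iio (-T), ENNReal.ofReal (W (z (-t)) +
      iteratedDeriv k (fun t => z (-t)) t ^ 2) ≤ ENNReal.ofReal (3 * (ε / 6)) := by
    refine le_of_eq_of_le ?_ hzE
    have h := (Measure.measurePreserving_neg (volume : Measure ℝ)).setLIntegral_comp_preimage_emb
      (MeasurableEquiv.neg ℝ).measurableEmbedding
      (fun t => ENNReal.ofReal (W (z t) + iteratedDeriv k z t ^ 2)) (Ioi T)
    rw [← h]
    have hset : Neg.neg ⁻¹' Ioi T = Iio (-T) := by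
      ext t
      simp only [mem_preimage, mem_Ioi, mem_Iio]
      constructor <;> intro <;> linarith
    rw [hset]
    simp only [iteratedDeriv_comp_neg_sq]
  have hcover : (univ : Set ℝ) ⊆ (Iio (-T) ∪ Icc (-T) T) ∪ Ioi T := by
    intro t _
    by_cases h1 : t < -T
    · exact Or.inl (Or.inl h1)
    by_cases h2 : t ≤ T
    · exact Or.inl (Or.inr ⟨not_lt.1 h1, h2⟩)
    · exact Or.inr (not_le.1 h2)
  unfold transitionEnergy
  rw [← setLIntegral_univ]
  refine (lintegral_mono_set hcover).trans ?_
  refine (lintegral_union_le _ _ _).trans ?_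
  refine (add_le_add (lintegral_union_le _ _ _) hright).trans ?_
  rw [hmid]
  refine (add_le_add_left (add_le_add_left hleft _) _).trans (le_of_eq ?_)
  rw [add_comm (ENNReal.ofReal _), add_assoc, ← ENNReal.ofReal_add (by positivity) (by positivity)]
  congr 2
  ring

/-- Competitors for `mKtilde` are competitors for every `mkEtaNT`. -/
lemma mkEtaN_le_mKtilde (k : ℕ) (W : ℝ → ℝ) (η : ℝ) (hη : 0 < η) (N : ℕ) :
    mkEtaN k W η N ≤ mKtilde k W := by
  refine le_iInf₂ fun u hu => ?_
  obtain ⟨hus, T, hT, hl, hr⟩ := hu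
  -- enlarging the interval puts both endpoints where `u` is locally constant
  have hT' : T + 1 ∈ Ioi (0 : ℝ) := by
    rw [mem_Ioi]
    linarith
  have hp : u =ᶠ[𝓝 (T + 1)] fun _ => 1 := by
    filter_upwards [lt_mem_nhds (show T < T + 1 by linarith)] with s hs using hr s hs.le
  have hm : u =ᶠ[𝓝 (-(T + 1))] fun _ => -1 := by
    filter_upwards [gt_mem_nhds (show -(T + 1) < -T by linarith)] with s hs using hl s hs.le
  have hj : ∀ ℓ : ℕ, 1 ≤ ℓ → ℓ ≤ k - 1 →
      |iteratedDeriv ℓ u (-(T + 1))| ≤ 1 / (N : ℝ) ∧ |iteratedDeriv ℓ u (T + 1)| ≤ 1 / (N : ℝ) := by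
    intro ℓ h1 _
    rw [hp.iteratedDeriv_eq, hm.iteratedDeriv_eq, iteratedDeriv_const, iteratedDeriv_const,
      if_neg (by omega), if_neg (by omega)]
    simp
  have hpη : |u (T + 1) - 1| ≤ η := by
    rw [hp.eq_of_nhds]
    simpa using hη.le
  have hmη : |u (-(T + 1)) + 1| ≤ η := by
    rw [hm.eq_of_nhds]
    simpa using hη.le
  exact (iInf₂_le (T + 1) hT').trans ((iInf₂_le u ⟨hus, hmη, hpη, hj⟩).trans
    (setLIntegral_le_lintegral _ _))

lemma mkEtaN_mono (k : ℕ) (W : ℝ → ℝ) (η : ℝ) :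
    Monotone fun N : ℕ => mkEtaN k W η (N + 1) := by
  intro M N hMN
  refine iInf₂_mono fun T _ => biInf_mono ?_
  rintro u ⟨h1, h2, h3, h4⟩
  have h : 1 / ((N + 1 : ℕ) : ℝ) ≤ 1 / ((M + 1 : ℕ) : ℝ) := by
    gcongr
  exact ⟨h1, h2, h3, fun ℓ a b => ⟨(h4 ℓ a b).1.trans h, (h4 ℓ a b).2.trans h⟩⟩

/-- Lemma 4.3: `lim_{η→0} lim_{N→+∞} m_k(η, N) = m̃_k`. -/
theorem statement9 (k : ℕ) (hk : 1 ≤ k) (W : ℝ → ℝ) (αW βW : ℝ)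
    (hα : 0 < αW) (hβ : 0 < βW) (hWc : Continuous W) (hWnn : ∀ z, 0 ≤ W z)
    (hWm : W (-1) = 0) (hWp : W 1 = 0)
    (hWlb : ∀ z, αW * min (min ((z + 1) ^ 2) ((z - 1) ^ 2)) βW ≤ W z) :
    ∃ g : ℝ → ℝ≥0∞,
      (∀ η : ℝ, 0 < η → η < Real.sqrt βW →
        Tendsto (fun N : ℕ => mkEtaN k W η N) atTop (𝓝 (g η))) ∧
      Tendsto g (𝓝[>] (0:ℝ)) (𝓝 (mKtilde k W)) := by
  -- the shift by one avoids `N = 0`, where `1 / N = 0` breaks monotonicity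
  refine ⟨fun η => ⨆ N : ℕ, mkEtaN k W η (N + 1), fun η _ _ => ?_, ?_⟩
  · rw [← tendsto_add_atTop_iff_nat 1]
    exact tendsto_atTop_iSup (mkEtaN_mono k W η)
  · refine tendsto_order.2 ⟨fun a ha => ?_, fun a ha => ?_⟩
    · obtain ⟨r, hr, har⟩ := ENNReal.lt_iff_exists_add_pos_lt.1 ha
      obtain ⟨ρ, hρ, H⟩ := mKtilde_le_mkEtaN_add k hk W hWc hWm hWp r (by exact_mod_cast hr)
      obtain ⟨N, hN⟩ := exists_nat_one_div_lt hρ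
      filter_upwards [mem_nhdsWithin_of_mem_nhds (gt_mem_nhds hρ)] with η hη
      have h := H η hη.le (N + 1) (by exact_mod_cast hN.le)
      rw [ENNReal.ofReal_coe_nnreal] at h
      have h2 : a < mkEtaN k W η (N + 1) := by
        by_contra! hle
        exact absurd (h.trans (add_le_add_left hle _)) (not_le.2 har)
      exact h2.trans_le (le_iSup (fun N : ℕ => mkEtaN k W η (N + 1)) N)
    · filter_upwards [self_mem_nhdsWithin] with η hη
      exact (iSup_le fun N => mkEtaN_le_mKtilde k W η hη (N + 1)).trans_lt ha
end

section
/- Let k ≥ 1 be an integer and let W : ℝ → [0,∞) be continuous with W(-1) = W(1) = 0 and W(z) ≥ α_W · min{(z+1)², (z-1)², β_W} for some α_W, β_W > 0. For 0 < η < min{1, √β_W}, integer N ≥ 1 and T̄ > 0, define m_k^+(η, N, T̄) = inf over 0 < T ≤ T̄ of min { ∫₀^T ( W(u) + (u^{(k)})² ) dt : u ∈ H^k(0,T), |u(0)-1| ≤ η, |u(T)-1| = 2η, |u^{(ℓ)}(0)| ≤ 1/N for all ℓ ∈ {1,…,k-1} }, and define m_k^-(η, N, T̄) analogously with the boundary conditions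 |u(0)+1| ≤ η and |u(T)+1| = 2η. Then m_k^*(η, N, T̄) := min{ m_k^+(η, N, T̄), m_k^-(η, N, T̄) } > 0. -/
/-!
The energy controls the oscillation of an admissible `u`, uniformly in `0 < T ≤ T̄`: if
`∫₀^T (W(u) + (u^{(k)})²) ≤ 1`, then `u^{(k-1)}` is bounded because `|x| ≤ 1 + x²`, and integrating
down from the bounds on `u^{(ℓ)}(0)` gives a bound on `u'` depending only on `k` and `T̄`
(`deriv_bound`). For `k = 1` the weighted inequality `|x| ≤ M + x²/M` gives equicontinuity directly.
So for every `ρ > 0` there is a `δ > 0` with `|u(T) - u(t)| ≤ ρ` as soon as `T - t ≤ δ`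
(`equicontinuity`).

As `|u(T) ∓ 1| = 2η` and `|u(0) ∓ 1| ≤ η`, taking `ρ < η` forces `T > δ`, and for
`t ∈ [T - δ, T]` the value `u(t)` satisfies `η ≤ |u(t) ∓ 1| ≤ 1 + η`. Since `η < 1`, such values stay
away from both wells, so `W(u) ≥ c₀ > 0` there and the energy is at least `c₀ δ`
(`energy_lower_bound`).
-/

open MeasureTheory Filter Topology Set
open scoped ENNReal NNReal

/-- `m_k^+(η, N, T̄)`: infimum over `0 < T ≤ T̄` and functions `u ∈ H^k(0,T)` with
`|u(0) - 1| ≤ η`, `|u(T) - 1| = 2η` and `|u^{(ℓ)}(0)| ≤ 1/N` for `1 ≤ ℓ ≤ k-1` of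
`∫₀^T (W(u) + (u^{(k)})²) dt`. -/
noncomputable def mkPlus (k : ℕ) (W : ℝ → ℝ) (η : ℝ) (N : ℕ) (Tb : ℝ) : ℝ≥0∞ :=
  ⨅ p ∈ {p : ℝ × (ℝ → ℝ) | 0 < p.1 ∧ p.1 ≤ Tb ∧ ContDiff ℝ k p.2 ∧
      |p.2 0 - 1| ≤ η ∧ |p.2 p.1 - 1| = 2 * η ∧
      ∀ ℓ : ℕ, 1 ≤ ℓ → ℓ ≤ k - 1 → |iteratedDeriv ℓ p.2 0| ≤ 1 / (N : ℝ)},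
    ∫⁻ t in Set.Ioo (0:ℝ) p.1, ENNReal.ofReal (W (p.2 t) + (iteratedDeriv k p.2 t) ^ 2)

/-- `m_k^-(η, N, T̄)`: as `m_k^+` but with the boundary conditions `|u(0) + 1| ≤ η` and
`|u(T) + 1| = 2η`. -/
noncomputable def mkMinus (k : ℕ) (W : ℝ → ℝ) (η : ℝ) (N : ℕ) (Tb : ℝ) : ℝ≥0∞ :=
  ⨅ p ∈ {p : ℝ × (ℝ → ℝ) | 0 < p.1 ∧ p.1 ≤ Tb ∧ ContDiff ℝ k p.2 ∧
      |p.2 0 + 1| ≤ η ∧ |p.2 p.1 + 1| = 2 * η ∧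
      ∀ ℓ : ℕ, 1 ≤ ℓ → ℓ ≤ k - 1 → |iteratedDeriv ℓ p.2 0| ≤ 1 / (N : ℝ)},
    ∫⁻ t in Set.Ioo (0:ℝ) p.1, ENNReal.ofReal (W (p.2 t) + (iteratedDeriv k p.2 t) ^ 2)

/-- The real-valued energy `∫₀^T (W(u) + (u^{(k)})²) dt`. -/
noncomputable def energy (k : ℕ) (W : ℝ → ℝ) (T : ℝ) (u : ℝ → ℝ) : ℝ :=
  ∫ t in (0:ℝ)..T, (W (u t) + (iteratedDeriv k u t) ^ 2)

lemma continuous_energy_density {k : ℕ} {W u : ℝ → ℝ} (hWc : Continuous W)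
    (hu : ContDiff ℝ k u) : Continuous fun t => W (u t) + (iteratedDeriv k u t) ^ 2 :=
  (hWc.comp hu.continuous).add ((hu.continuous_iteratedDeriv k le_rfl).pow 2)

lemma lintegral_eq_energy {k : ℕ} {W u : ℝ → ℝ} {T : ℝ} (hWc : Continuous W)
    (hWnn : ∀ z, 0 ≤ W z) (hT : 0 < T) (hu : ContDiff ℝ k u) :
    ∫⁻ t in Set.Ioo (0:ℝ) T, ENNReal.ofReal (W (u t) + (iteratedDeriv k u t) ^ 2)
      = ENNReal.ofReal (energy k W T u) := by
  have hc := continuous_energy_density hWc hu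
  rw [energy, intervalIntegral.integral_of_le hT.le,
    MeasureTheory.integral_Ioc_eq_integral_Ioo, ofReal_integral_eq_lintegral_ofReal]
  · exact (hc.integrableOn_Icc (a := 0) (b := T)).mono_set Ioo_subset_Icc_self
  · exact Eventually.of_forall fun t => add_nonneg (hWnn _) (sq_nonneg _)

lemma sub_eq_integral_iteratedDeriv {n : ℕ} {k : ℕ} (hn : n < k) {u : ℝ → ℝ}
    (hu : ContDiff ℝ k u) (a b : ℝ) :
    iteratedDeriv n u b - iteratedDeriv n u a = ∫ t in a..b, iteratedDeriv (n + 1) u t := by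
  have hd : Differentiable ℝ (iteratedDeriv n u) :=
    hu.differentiable_iteratedDeriv n (by exact_mod_cast hn)
  have hc : Continuous (iteratedDeriv (n + 1) u) :=
    hu.continuous_iteratedDeriv (n + 1) (by exact_mod_cast hn)
  refine (intervalIntegral.integral_eq_sub_of_hasDerivAt (fun x _ => ?_)
    (hc.intervalIntegrable a b)).symm
  rw [iteratedDeriv_succ]
  exact (hd x).hasDerivAt

/-- The bound comes from integrating `|x| ≤ M + x² / M` with `x = u^{(n+1)}`, the energy being at
most `1`. -/
lemma abs_sub_le_of_energy {n : ℕ} {W u : ℝ → ℝ} {T M a b : ℝ} (hWc : Continuous W)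
    (hWnn : ∀ z, 0 ≤ W z) (hu : ContDiff ℝ (n + 1 : ℕ) u) (hM : 0 < M)
    (ha : 0 ≤ a) (hab : a ≤ b) (hb : b ≤ T) (hE : energy (n + 1) W T u ≤ 1) :
    |iteratedDeriv n u b - iteratedDeriv n u a| ≤ M * (b - a) + 1 / M := by
  have hc := continuous_energy_density hWc hu
  have hck : Continuous (iteratedDeriv (n + 1) u) := hu.continuous_iteratedDeriv _ le_rfl
  rw [sub_eq_integral_iteratedDeriv (Nat.lt_succ_self n) hu]
  have h1 : |∫ t in a..b, iteratedDeriv (n + 1) u t|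
      ≤ ∫ t in a..b, |iteratedDeriv (n + 1) u t| :=
    intervalIntegral.abs_integral_le_integral_abs hab
  have h2 : ∫ t in a..b, |iteratedDeriv (n + 1) u t|
      ≤ ∫ t in a..b, (M + (1 / M) * (W (u t) + (iteratedDeriv (n + 1) u t) ^ 2)) := by
    refine intervalIntegral.integral_mono_on hab (hck.abs.intervalIntegrable _ _)
      ((continuous_const.add (continuous_const.mul hc)).intervalIntegrable _ _) fun t _ => ?_
    have hW := hWnn (u t)
    set x := iteratedDeriv (n + 1) u t
    have : |x| * M ≤ M * M + (W (u t) + x ^ 2) := by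
      rw [← sq_abs x]; nlinarith [sq_nonneg (|x| - M), abs_nonneg x]
    calc |x| = (|x| * M) / M := by field_simp
      _ ≤ (M * M + (W (u t) + x ^ 2)) / M := by gcongr
      _ = _ := by field_simp
  have h3 : ∫ t in a..b, (M + (1 / M) * (W (u t) + (iteratedDeriv (n + 1) u t) ^ 2))
      = M * (b - a) + (1 / M) * ∫ t in a..b, (W (u t) + (iteratedDeriv (n + 1) u t) ^ 2) := by
    rw [intervalIntegral.integral_add (f := fun _ => M)
      (g := fun t => (1 / M) * (W (u t) + (iteratedDeriv (n + 1) u t) ^ 2)) (by simp)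
      ((continuous_const.mul hc).intervalIntegrable _ _), intervalIntegral.integral_const_mul]
    simp [mul_comm]
  have h4 : ∫ t in a..b, (W (u t) + (iteratedDeriv (n + 1) u t) ^ 2) ≤ 1 := by
    refine le_trans ?_ hE
    exact intervalIntegral.integral_mono_interval ha hab hb
      (Eventually.of_forall fun t => add_nonneg (hWnn _) (sq_nonneg _))
      (hc.intervalIntegrable _ _)
  have h5 : (1 / M) * ∫ t in a..b, (W (u t) + (iteratedDeriv (n + 1) u t) ^ 2) ≤ 1 / M := by
    have : 0 < 1 / M := by positivity
    nlinarith
  linarith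

/-- Uniform bound on `u^{(m)}` for `1 ≤ m ≤ n`, by downward induction on `m = n - j`. -/
lemma deriv_bound (n : ℕ) (Tb : ℝ) (hTb : 0 < Tb) (j : ℕ) :
    ∃ B : ℝ, 0 < B ∧ ∀ (W u : ℝ → ℝ) (T : ℝ), Continuous W → (∀ z, 0 ≤ W z) →
      ContDiff ℝ (n + 1 : ℕ) u → T ≤ Tb → energy (n + 1) W T u ≤ 1 →
      (∀ ℓ : ℕ, 1 ≤ ℓ → ℓ ≤ n → |iteratedDeriv ℓ u 0| ≤ 1) →
      ∀ m, 1 ≤ m → m + j = n → ∀ t ∈ Icc 0 T, |iteratedDeriv m u t| ≤ B := by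
  induction j with
  | zero =>
    refine ⟨Tb + 2, by positivity, fun W u T hWc hWnn hu hT hE h0 m hm hmn t ht => ?_⟩
    obtain rfl : m = n := by omega
    have h := abs_sub_le_of_energy hWc hWnn hu one_pos le_rfl ht.1 ht.2 hE
    have h' := abs_sub_abs_le_abs_sub (iteratedDeriv m u t) (iteratedDeriv m u 0)
    have := h0 m hm le_rfl
    linarith [ht.2]
  | succ j ih =>
    obtain ⟨B, hB, ih⟩ := ih
    refine ⟨1 + B * Tb, by positivity, fun W u T hWc hWnn hu hT hE h0 m hm hmn t ht => ?_⟩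
    have hb := ih W u T hWc hWnn hu hT hE h0 (m + 1) (by omega) (by omega)
    have h : |iteratedDeriv m u t - iteratedDeriv m u 0| ≤ B * |t - 0| := by
      rw [sub_eq_integral_iteratedDeriv (k := n + 1) (by omega) hu, ← Real.norm_eq_abs]
      refine intervalIntegral.norm_integral_le_of_norm_le_const fun x hx => ?_
      rw [uIoc_of_le ht.1] at hx
      exact hb x ⟨hx.1.le, hx.2.trans ht.2⟩
    rw [sub_zero, abs_of_nonneg ht.1] at h
    have h' := abs_sub_abs_le_abs_sub (iteratedDeriv m u t) (iteratedDeriv m u 0)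
    have := h0 m hm (by omega)
    have : B * t ≤ B * Tb := mul_le_mul_of_nonneg_left (ht.2.trans hT) hB.le
    linarith

lemma equicontinuity (n : ℕ) (Tb : ℝ) (hTb : 0 < Tb) (ρ : ℝ) (hρ : 0 < ρ) :
    ∃ δ : ℝ, 0 < δ ∧ ∀ (W u : ℝ → ℝ) (T : ℝ), Continuous W → (∀ z, 0 ≤ W z) →
      ContDiff ℝ (n + 1 : ℕ) u → T ≤ Tb → energy (n + 1) W T u ≤ 1 →
      (∀ ℓ : ℕ, 1 ≤ ℓ → ℓ ≤ n → |iteratedDeriv ℓ u 0| ≤ 1) →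
      ∀ t ∈ Icc 0 T, T - t ≤ δ → |u T - u t| ≤ ρ := by
  rcases Nat.eq_zero_or_pos n with rfl | hn
  · -- `M = 2 / ρ` and `δ = ρ² / 4` make both terms of `M (T - t) + 1 / M` at most `ρ / 2`.
    refine ⟨ρ ^ 2 / 4, by positivity, fun W u T hWc hWnn hu hT hE h0 t ht htd => ?_⟩
    have h := abs_sub_le_of_energy (M := 2 / ρ) hWc hWnn hu (by positivity) ht.1 ht.2 le_rfl hE
    simp only [iteratedDeriv_zero] at h
    have h1 : 2 / ρ * (T - t) ≤ 2 / ρ * (ρ ^ 2 / 4) := by gcongr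
    have h2 : 2 / ρ * (ρ ^ 2 / 4) = ρ / 2 := by field_simp; norm_num
    have h3 : 1 / (2 / ρ) = ρ / 2 := by field_simp
    linarith
  · obtain ⟨B, hB, hb⟩ := deriv_bound n Tb hTb (n - 1)
    refine ⟨ρ / B, by positivity, fun W u T hWc hWnn hu hT hE h0 t ht htd => ?_⟩
    have hb := hb W u T hWc hWnn hu hT hE h0 1 le_rfl (by omega)
    have h : |iteratedDeriv 0 u T - iteratedDeriv 0 u t| ≤ B * |T - t| := by
      rw [sub_eq_integral_iteratedDeriv (k := n + 1) (by omega) hu, ← Real.norm_eq_abs]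
      refine intervalIntegral.norm_integral_le_of_norm_le_const fun x hx => ?_
      rw [uIoc_of_le ht.2] at hx
      exact hb x ⟨ht.1.trans hx.1.le, hx.2⟩
    simp only [iteratedDeriv_zero] at h
    rw [abs_of_nonneg (sub_nonneg.2 ht.2)] at h
    have : B * (T - t) ≤ B * (ρ / B) := by gcongr
    have : B * (ρ / B) = ρ := by field_simp
    linarith

/-- Uniform lower bound around a single well `σ`; `hW` says that `W ≥ c₀` on the annulus around `σ`
that `u` occupies near the endpoint `T`. -/
lemma energy_lower_bound (n : ℕ) (W : ℝ → ℝ) (hWc : Continuous W) (hWnn : ∀ z, 0 ≤ W z)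
    (σ η Tb c₀ : ℝ) (hη : 0 < η) (hη1 : η < 1) (hTb : 0 < Tb) (hc₀ : 0 < c₀)
    (hW : ∀ z, η ≤ |z - σ| → |z - σ| ≤ 1 + η → c₀ ≤ W z) :
    ∃ c : ℝ, 0 < c ∧ ∀ (T : ℝ) (u : ℝ → ℝ), 0 < T → T ≤ Tb → ContDiff ℝ (n + 1 : ℕ) u →
      |u 0 - σ| ≤ η → |u T - σ| = 2 * η →
      (∀ ℓ : ℕ, 1 ≤ ℓ → ℓ ≤ n → |iteratedDeriv ℓ u 0| ≤ 1) →
      c ≤ energy (n + 1) W T u := by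
  set ρ := min η (1 - η) / 2 with hρdef
  have hmin : 0 < min η (1 - η) := lt_min hη (by linarith)
  have hρ : 0 < ρ := by positivity
  have hρ1 : ρ < η := by have := min_le_left η (1 - η); linarith
  have hρ2 : ρ < 1 - η := by have := min_le_right η (1 - η); linarith
  obtain ⟨δ, hδ, h⟩ := equicontinuity n Tb hTb ρ hρ
  refine ⟨min 1 (c₀ * δ), lt_min one_pos (by positivity), fun T u hT hTTb hu h0 hTe hd => ?_⟩
  rcases le_total 1 (energy (n + 1) W T u) with hE | hE
  · exact (min_le_left _ _).trans hE
  refine (min_le_right _ _).trans ?_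
  have h := h W u T hWc hWnn hu hTTb hE hd
  have hTδ : δ ≤ T := by
    by_contra! hlt
    have h1 := h 0 ⟨le_rfl, hT.le⟩ (by linarith)
    have h2 := abs_sub_abs_le_abs_sub (u T - σ) (u 0 - σ)
    rw [sub_sub_sub_cancel_right] at h2
    linarith
  have hc := continuous_energy_density hWc hu
  calc c₀ * δ = ∫ _ in (T - δ)..T, c₀ := by simp [mul_comm]
    _ ≤ ∫ t in (T - δ)..T, (W (u t) + (iteratedDeriv (n + 1) u t) ^ 2) := by
      refine intervalIntegral.integral_mono_on (by linarith) (by simp)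
        (hc.intervalIntegrable _ _) fun t ht => ?_
      have h1 := h t ⟨by linarith [ht.1], ht.2⟩ (by linarith [ht.1])
      have h2 := abs_sub_abs_le_abs_sub (u T - σ) (u t - σ)
      have h3 := abs_sub_abs_le_abs_sub (u t - σ) (u T - σ)
      rw [sub_sub_sub_cancel_right] at h2 h3
      rw [abs_sub_comm (u t) (u T)] at h3
      have := hW (u t) (by linarith) (by linarith)
      have := sq_nonneg (iteratedDeriv (n + 1) u t)
      linarith
    _ ≤ energy (n + 1) W T u :=
      intervalIntegral.integral_mono_interval (by linarith) (by linarith) le_rfl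
        (Eventually.of_forall fun t => add_nonneg (hWnn _) (sq_nonneg _))
        (hc.intervalIntegrable _ _)

/-- Lemma 4.4: for every `T̄ > 0`,
`m_k^*(η, N, T̄) = min{m_k^+(η, N, T̄), m_k^-(η, N, T̄)} > 0`. -/
theorem statement10 (k N : ℕ) (hk : 1 ≤ k) (hN : 1 ≤ N) (W : ℝ → ℝ) (αW βW : ℝ)
    (hα : 0 < αW) (hβ : 0 < βW) (hWc : Continuous W) (hWnn : ∀ z, 0 ≤ W z)
    (hWm : W (-1) = 0) (hWp : W 1 = 0)
    (hWlb : ∀ z, αW * min (min ((z + 1) ^ 2) ((z - 1) ^ 2)) βW ≤ W z)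
    (η : ℝ) (hη : 0 < η) (hη' : η < min 1 (Real.sqrt βW))
    (Tb : ℝ) (hTb : 0 < Tb) :
    0 < min (mkPlus k W η N Tb) (mkMinus k W η N Tb) := by
  have hη1 : η < 1 := hη'.trans_le (min_le_left _ _)
  obtain ⟨n, rfl⟩ : ∃ n, k = n + 1 := ⟨k - 1, by omega⟩
  have hN1 : 1 / (N : ℝ) ≤ 1 := by
    rw [div_le_one (by exact_mod_cast hN)]
    exact_mod_cast hN
  set c₀ := αW * min (min (η ^ 2) ((1 - η) ^ 2)) βW with hc₀def
  have h1η : 0 < 1 - η := by linarith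
  have hc₀ : 0 < c₀ := by positivity
  -- On the annulus around one well, the distance to the other well is at least `1 - η`.
  have hWplus : ∀ z, η ≤ |z - 1| → |z - 1| ≤ 1 + η → c₀ ≤ W z := by
    intro z h1 h2
    refine le_trans ?_ (hWlb z)
    have ha : η ^ 2 ≤ (z - 1) ^ 2 := by rw [← sq_abs (z - 1)]; gcongr
    have hb : (1 - η) ^ 2 ≤ (z + 1) ^ 2 := by
      have := (abs_le.1 h2).1
      gcongr
      linarith
    rw [hc₀def, min_comm (η ^ 2)]
    gcongr
  have hWminus : ∀ z, η ≤ |z - (-1)| → |z - (-1)| ≤ 1 + η → c₀ ≤ W z := by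
    intro z h1 h2
    rw [sub_neg_eq_add] at h1 h2
    refine le_trans ?_ (hWlb z)
    have ha : η ^ 2 ≤ (z + 1) ^ 2 := by rw [← sq_abs (z + 1)]; gcongr
    have hb : (1 - η) ^ 2 ≤ (z - 1) ^ 2 := by
      have := (abs_le.1 h2).2
      nlinarith
    rw [hc₀def]
    gcongr
  obtain ⟨c, hc, hplus⟩ :=
    energy_lower_bound n W hWc hWnn 1 η Tb c₀ hη hη1 hTb hc₀ hWplus
  obtain ⟨d, hd, hminus⟩ :=
    energy_lower_bound n W hWc hWnn (-1) η Tb c₀ hη hη1 hTb hc₀ hWminus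
  refine lt_min ((ENNReal.ofReal_pos.2 hc).trans_le ?_) ((ENNReal.ofReal_pos.2 hd).trans_le ?_)
  · refine le_iInf₂ fun p hp => ?_
    obtain ⟨hT, hTTb, hu, h0, hTe, hder⟩ := hp
    rw [lintegral_eq_energy hWc hWnn hT hu]
    exact ENNReal.ofReal_le_ofReal (hplus p.1 p.2 hT hTTb hu h0 hTe
      fun ℓ h1 h2 => (hder ℓ h1 h2).trans hN1)
  · refine le_iInf₂ fun p hp => ?_
    obtain ⟨hT, hTTb, hu, h0, hTe, hder⟩ := hp
    rw [lintegral_eq_energy hWc hWnn hT hu]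
    exact ENNReal.ofReal_le_ofReal (hminus p.1 p.2 hT hTTb hu (by rwa [sub_neg_eq_add])
      (by rwa [sub_neg_eq_add]) fun ℓ h1 h2 => (hder ℓ h1 h2).trans hN1)
end
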